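/- A language L ⊆ A⁺ over a finite alphabet A is FO(<)-definable if and only if it is LTL-definable. -/

import Mathlib

open FirstOrder

/-! ### FO(<)-definability of word languages -/

/-- Relation symbols of the word signature `σ_A`: a unary predicate for each letter
`a ∈ A` and the binary predicate `<`. -/
def WordRel (A : Type) : ℕ → Type
  | 1 => A
  | 2 => Unit
  | _ => Empty

/-- The first-order signature `σ_A` of words over `A`. -/
def wordLang (A : Type) : FirstOrder.Language := ⟨fun _ => Empty, WordRel A⟩

/-- A word regarded as a first-order `σ_A`-structure on its set of positions. -/
def wordStructure {A : Type} (w : List A) : (wordLang A).Structure (Fin w.length) where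
  funMap := fun f _ => Empty.elim f
  RelMap := fun {n} r =>
    match n, r with
    | 1, a => fun v => w.get (v 0) = a
    | 2, _ => fun v => v 0 < v 1

/-- Truth of a `σ_A`-sentence in a word. -/
def SatWord {A : Type} (w : List A) (θ : (wordLang A).Sentence) : Prop :=
  letI := wordStructure w
  (Fin w.length) ⊨ θ

/-- A language `L ⊆ A⁺` is FO(<)-definable if it is the set of nonempty words
satisfying some `σ_A`-sentence. -/
def FODefinable {A : Type} (L : Set (List A)) : Prop :=
  ∃ θ : (wordLang A).Sentence, L = {w : List A | w ≠ [] ∧ SatWord w θ}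

/-! ### LTL-definability -/

/-- LTL-formulas over propositional variables of type `P`. -/
inductive LTL (P : Type) : Type
  | top : LTL P
  | var : P → LTL P
  | and : LTL P → LTL P → LTL P
  | not : LTL P → LTL P
  | next : LTL P → LTL P
  | ev : LTL P → LTL P
  | untl : LTL P → LTL P → LTL P

/-- A finite temporal model `({0,…,ℓ}, <, V)` over propositional variables `P`. -/
structure TModel (P : Type) : Type where
  len : ℕ
  V : P → ℕ → Prop

/-- Truth of an LTL-formula at a time point of a finite temporal model. -/
def LTL.sat {P : Type} (M : TModel P) : ℕ → LTL P → Prop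
  | _, .top => True
  | n, .var p => M.V p n
  | n, .and φ ψ => LTL.sat M n φ ∧ LTL.sat M n ψ
  | n, .not φ => ¬ LTL.sat M n φ
  | n, .next φ => n < M.len ∧ LTL.sat M (n + 1) φ
  | n, .ev φ => ∃ m, n < m ∧ m ≤ M.len ∧ LTL.sat M m φ
  | n, .untl φ ψ => ∃ m, n < m ∧ m ≤ M.len ∧ LTL.sat M m φ ∧
      ∀ k, n < k → k < m → LTL.sat M k ψ

/-- The nonempty word `a :: l` regarded as a finite temporal model over the letters of
`A`, where letter `b` is true at position `i` iff the `i`-th letter of the word is `b`. -/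
def wModel {A : Type} (a : A) (l : List A) : TModel A where
  len := l.length
  V := fun b n => (a :: l)[n]? = some b

/-- A language `L ⊆ A⁺` is LTL-definable if it consists of the nonempty words
satisfying some LTL-formula (over the letters of `A`) at the initial position. -/
def LTLDefinable {A : Type} (L : Set (List A)) : Prop :=
  ∃ φ : LTL A, L = {w : List A | ∃ (a : A) (l : List A), w = a :: l ∧
    LTL.sat (wModel a l) 0 φ}

/-!
A sentence of FO(<) cannot see more of a word than its value in a finite aperiodic monoid: an atomic
formula asks for the letter or the other marks at the first marked position, which an idempotent
monoid can read off, and a quantifier is absorbed by the Schützenberger product. Conversely, the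
words with a given value in a finite aperiodic monoid `M` are described by temporal conditions, by
induction on `M` and, for fixed `M`, on the letters with value different from `1` (Diekert and
Gastin). Cutting a word at each occurrence of such a letter `c` leaves blocks without `c`; if `c`
has value `x`, the values of the blocks combine in the local divisor `Mx ∩ xM`, which is aperiodic
and smaller than `M` because `1` is not in it. A temporal condition on the sequence of block values
turns into one on the word itself, read at the occurrences of `c`. The passage from temporal logic
to FO(<) is the standard translation.
-/

namespace Kamp

/-! ### Aperiodic monoids -/

/-- A monoid is aperiodic if the powers of each of its elements are eventually constant; for finite
monoids this means that all subgroups are trivial. -/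
def IsAperiodic (M : Type*) [Monoid M] : Prop :=
  ∀ m : M, ∃ n : ℕ, m ^ (n + 1) = m ^ n

theorem pow_succ_eq_pow_of_le {M : Type*} [Monoid M] {m : M} {n k : ℕ}
    (h : m ^ (n + 1) = m ^ n) (hk : n ≤ k) : m ^ (k + 1) = m ^ k := by
  obtain ⟨d, rfl⟩ := Nat.exists_eq_add_of_le hk
  rw [add_right_comm, pow_add, h, ← pow_add]

theorem IsAperiodic.of_mul_self {M : Type*} [Monoid M] (h : ∀ m : M, m * m = m) : IsAperiodic M :=
  fun m => ⟨1, by rw [pow_succ, pow_one, h]⟩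

theorem IsAperiodic.prod {M N : Type*} [Monoid M] [Monoid N]
    (hM : IsAperiodic M) (hN : IsAperiodic N) : IsAperiodic (M × N) := by
  rintro ⟨a, b⟩
  obtain ⟨n, hn⟩ := hM a
  obtain ⟨k, hk⟩ := hN b
  exact ⟨max n k, Prod.ext (pow_succ_eq_pow_of_le hn (le_max_left _ _))
    (pow_succ_eq_pow_of_le hk (le_max_right _ _))⟩

theorem IsAperiodic.eq_one_of_mul_eq_one {M : Type*} [Monoid M] (hM : IsAperiodic M) {p x : M}
    (h : p * x = 1) : x = 1 := by
  obtain ⟨n, hn⟩ := hM x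
  calc x = p ^ n * x ^ n * x := by rw [pow_mul_pow_eq_one n h, one_mul]
    _ = p ^ n * x ^ n := by rw [mul_assoc, ← pow_succ, hn]
    _ = 1 := pow_mul_pow_eq_one n h

/-! ### The first marked position -/

/-- The left-zero semigroup on `α` with an adjoined identity `none`; a product in it is its first
factor other than `1`. -/
def LeftZeroMonoid (α : Type*) : Type _ := Option α

namespace LeftZeroMonoid

variable {α : Type*}

instance [Finite α] : Finite (LeftZeroMonoid α) := inferInstanceAs (Finite (Option α))

instance : Monoid (LeftZeroMonoid α) where
  mul x y := Option.or x y
  one := none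
  mul_assoc x y z := Option.or_assoc
  one_mul x := Option.none_or
  mul_one x := Option.or_none

theorem isAperiodic : IsAperiodic (LeftZeroMonoid α) :=
  .of_mul_self fun _ => Option.or_self

theorem mul_eq_some_iff {x y : LeftZeroMonoid α} {a : α} :
    x * y = some a ↔ x = some a ∨ x = 1 ∧ y = some a :=
  Option.or_eq_some_iff

theorem prod_ofFn_eq_some_iff {k : ℕ} {f : Fin k → LeftZeroMonoid α} {a : α} :
    (List.ofFn f).prod = some a ↔ ∃ i, f i = some a ∧ ∀ j < i, f j = 1 := by
  induction k with
  | zero => simp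
  | succ k ih =>
    simp only [List.ofFn_succ, List.prod_cons, mul_eq_some_iff, ih, Fin.exists_fin_succ,
      Fin.forall_fin_succ, Fin.succ_lt_succ_iff, Fin.not_lt_zero, Fin.succ_pos, forall_const,
      IsEmpty.forall_iff, implies_true, and_true]
    tauto

end LeftZeroMonoid

/-! ### Marking one position -/

/-- The one-sided Schützenberger product of `M`: an element records the value of a word together
with the set of values that the word takes when one of its positions is marked. -/
@[ext]
structure SchutzenbergerProduct (M : Type*) where
  value : M
  marked : Set M

namespace SchutzenbergerProduct

open MulOpposite
open scoped Pointwise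

variable {M : Type*}

instance [Finite M] : Finite (SchutzenbergerProduct M) :=
  Finite.of_injective (fun p => (p.value, p.marked)) fun _ _ h =>
    SchutzenbergerProduct.ext (congrArg Prod.fst h) (congrArg Prod.snd h)

variable [Monoid M]

instance : Mul (SchutzenbergerProduct M) :=
  ⟨fun p q => ⟨p.value * q.value, p.value • q.marked ∪ op q.value • p.marked⟩⟩

instance : One (SchutzenbergerProduct M) := ⟨⟨1, ∅⟩⟩

@[simp] theorem value_mul (p q : SchutzenbergerProduct M) : (p * q).value = p.value * q.value := rfl

@[simp] theorem marked_mul (p q : SchutzenbergerProduct M) :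
    (p * q).marked = p.value • q.marked ∪ op q.value • p.marked := rfl

@[simp] theorem value_one : (1 : SchutzenbergerProduct M).value = 1 := rfl

@[simp] theorem marked_one : (1 : SchutzenbergerProduct M).marked = ∅ := rfl

instance : Monoid (SchutzenbergerProduct M) where
  mul_assoc p q r := SchutzenbergerProduct.ext (mul_assoc _ _ _) <| by
    simp [Set.smul_set_union, smul_smul, Set.union_assoc, smul_comm (op r.value) p.value]
  one_mul p := by ext <;> simp
  mul_one p := by ext <;> simp

@[simp] theorem value_pow (p : SchutzenbergerProduct M) (k : ℕ) :
    (p ^ k).value = p.value ^ k := by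
  induction k with
  | zero => simp
  | succ k ih => simp [pow_succ, ih]

theorem mem_marked_pow_iff {p : SchutzenbergerProduct M} {k : ℕ} {z : M} :
    z ∈ (p ^ k).marked ↔
      ∃ i j, i + j + 1 = k ∧ ∃ x ∈ p.marked, p.value ^ i * x * p.value ^ j = z := by
  induction k generalizing z with
  | zero => simp
  | succ k ih =>
    simp only [pow_succ, marked_mul, Set.mem_union, Set.mem_smul_set, ih, value_pow, smul_eq_mul,
      op_smul_eq_mul]
    constructor
    · rintro (⟨x, hx, rfl⟩ | ⟨_, ⟨i, j, hij, x, hx, rfl⟩, rfl⟩)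
      · exact ⟨k, 0, rfl, x, hx, by simp⟩
      · exact ⟨i, j + 1, by omega, x, hx, by simp [pow_succ, mul_assoc]⟩
    · rintro ⟨i, _ | j, hij, x, hx, rfl⟩
      · obtain rfl : i = k := by omega
        exact .inl ⟨x, hx, by simp⟩
      · exact .inr ⟨_, ⟨i, j, by omega, x, hx, rfl⟩, by simp [pow_succ, mul_assoc]⟩

theorem isAperiodic (hM : IsAperiodic M) : IsAperiodic (SchutzenbergerProduct M) := by
  intro p
  obtain ⟨n, hn⟩ := hM p.value
  have stable {k : ℕ} (hk : n ≤ k) : p.value ^ (k + 1) = p.value ^ k := pow_succ_eq_pow_of_le hn hk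
  -- If `i + j + 1 > 2n`, then one of the exponents in `mⁱ x mʲ` is in the stable range.
  refine ⟨2 * n + 1, SchutzenbergerProduct.ext ?_ (Set.ext fun z => ?_)⟩
  · simpa using stable (by omega)
  · rw [mem_marked_pow_iff, mem_marked_pow_iff]
    constructor
    · rintro ⟨i, j, hij, x, hx, rfl⟩
      obtain ⟨i, rfl, hi⟩ | ⟨j, rfl, hj⟩ :
          (∃ i', i = i' + 1 ∧ n ≤ i') ∨ ∃ j', j = j' + 1 ∧ n ≤ j' := by
        rcases i with _ | i <;> rcases j with _ | j <;> simp <;> omega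
      · exact ⟨i, j, by omega, x, hx, by rw [stable hi]⟩
      · exact ⟨i, j, by omega, x, hx, by rw [stable hj]⟩
    · rintro ⟨i, j, hij, x, hx, rfl⟩
      obtain hi | hj : n ≤ i ∨ n ≤ j := by omega
      · exact ⟨i + 1, j, by omega, x, hx, by rw [stable hi]⟩
      · exact ⟨i, j + 1, by omega, x, hx, by rw [stable hj]⟩

theorem prod_ofFn {k : ℕ} (f g : Fin k → M) :
    (List.ofFn fun i => (⟨f i, {g i}⟩ : SchutzenbergerProduct M)).prod =
      ⟨(List.ofFn f).prod, Set.range fun p => (List.ofFn (Function.update f p (g p))).prod⟩ := by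
  induction k with
  | zero => ext <;> simp
  | succ k ih =>
    ext z
    · simp [List.ofFn_succ, ih]
    · have update_succ (p : Fin k) (x : M) : (fun i : Fin k => Function.update f p.succ x i.succ) =
          Function.update (fun i => f i.succ) p x :=
        Function.update_comp_eq_of_injective f (Fin.succ_injective k) p x
      simp [List.ofFn_succ, ih, Fin.exists_fin_succ, Set.mem_smul_set, update_succ, eq_comm]

end SchutzenbergerProduct

/-! ### The local divisor -/

/-- The local divisor of `M` at `x`: the set `Mx ∩ xM` with the multiplication
`(p * x) ∘ (x * q) = p * x * q`, whose identity is `x`. -/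
def LocalDivisor (M : Type*) [Monoid M] (x : M) : Type _ :=
  {z : M // (∃ p, p * x = z) ∧ ∃ q, x * q = z}

namespace LocalDivisor

variable {M : Type*} [Monoid M] {x : M}

instance [Finite M] : Finite (LocalDivisor M x) := Subtype.finite

noncomputable instance : Mul (LocalDivisor M x) where
  mul y z := ⟨y.2.1.choose * z.1, by
    obtain ⟨p, hp⟩ := z.2.1
    exact ⟨y.2.1.choose * p, by rw [mul_assoc, hp]⟩, by
    obtain ⟨q, hq⟩ := z.2.2
    obtain ⟨r, hr⟩ := y.2.2
    exact ⟨r * q, by rw [← mul_assoc, hr, ← hq, ← mul_assoc, y.2.1.choose_spec]⟩⟩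

instance : One (LocalDivisor M x) := ⟨⟨x, ⟨1, one_mul x⟩, ⟨1, mul_one x⟩⟩⟩

theorem val_one : (1 : LocalDivisor M x).1 = x := rfl

theorem val_mul_of_eq_mul_right (y z : LocalDivisor M x) {q : M} (hq : x * q = z.1) :
    (y * z).1 = y.1 * q := by
  change y.2.1.choose * z.1 = y.1 * q
  rw [← hq, ← mul_assoc, y.2.1.choose_spec]

theorem val_mul_of_eq_mul_left (y z : LocalDivisor M x) {p : M} (hp : p * x = y.1) :
    (y * z).1 = p * z.1 := by
  obtain ⟨q, hq⟩ := z.2.2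
  rw [val_mul_of_eq_mul_right y z hq, ← hp, ← hq, mul_assoc]

noncomputable instance : Monoid (LocalDivisor M x) where
  mul_assoc a b c := Subtype.ext <| by
    obtain ⟨p, hp⟩ := a.2.1
    obtain ⟨q, hq⟩ := c.2.2
    rw [val_mul_of_eq_mul_right _ c hq, val_mul_of_eq_mul_left a b hp,
      val_mul_of_eq_mul_left a _ hp, val_mul_of_eq_mul_right b c hq, mul_assoc]
  one_mul a := Subtype.ext <|
    (val_mul_of_eq_mul_left 1 a (one_mul x)).trans (one_mul _)
  mul_one a := Subtype.ext <|
    (val_mul_of_eq_mul_right a 1 (mul_one x)).trans (mul_one _)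

theorem val_pow (y : LocalDivisor M x) {q : M} (hq : x * q = y.1) (n : ℕ) :
    (y ^ n).1 = x * q ^ n := by
  induction n with
  | zero => rw [pow_zero, pow_zero, mul_one, val_one]
  | succ n ih => rw [pow_succ, val_mul_of_eq_mul_right _ y hq, ih, pow_succ, mul_assoc]

theorem isAperiodic (hM : IsAperiodic M) : IsAperiodic (LocalDivisor M x) := by
  intro y
  obtain ⟨q, hq⟩ := y.2.2
  obtain ⟨n, hn⟩ := hM q
  exact ⟨n, Subtype.ext (by rw [val_pow y hq, val_pow y hq, hn])⟩

theorem card_lt [Finite M] (hM : IsAperiodic M) (hx : x ≠ 1) :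
    Nat.card (LocalDivisor M x) < Nat.card M := by
  have one_notMem : ¬((∃ p, p * x = 1) ∧ ∃ q, x * q = 1) :=
    fun ⟨⟨_, hp⟩, _⟩ => hx (hM.eq_one_of_mul_eq_one hp)
  exact Finite.card_subtype_lt one_notMem

/-- The element `x * t * x` of the local divisor at `x`. -/
def conj (x t : M) : LocalDivisor M x :=
  ⟨x * t * x, ⟨x * t, rfl⟩, ⟨t * x, (mul_assoc _ _ _).symm⟩⟩

theorem val_prod_map_conj (ts : List M) :
    (ts.map (conj x)).prod.1 = x * (ts.map (· * x)).prod := by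
  induction ts with
  | nil => exact (mul_one x).symm
  | cons t ts ih =>
    rw [List.map_cons, List.prod_cons, val_mul_of_eq_mul_left (conj x t) _ rfl, ih, List.map_cons,
      List.prod_cons]
    simp only [mul_assoc]

end LocalDivisor

/-! ### From first-order logic to aperiodic monoids -/

section Recognizable

open Filter FirstOrder.Language

variable {A : Type}

/-- A property `P` of words with `n` marked positions is recognizable if a finite aperiodic monoid
decides it from the product of the values of the letters, each paired with the marks on its
position. The assignment of values ignores the letter outside a finite set, so that infinite
alphabets are allowed. -/
def Recognizable {n : ℕ} (P : (w : List A) → (Fin n → Fin w.length) → Prop) : Prop :=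
  ∃ (M : Type) (_ : Monoid M) (_ : Finite M) (h : A → (Fin n → Prop) → M) (S : Set M),
    IsAperiodic M ∧ EventuallyConst h cofinite ∧
      ∀ w v, P w v ↔ (List.ofFn fun i => h (w.get i) fun j => v j = i).prod ∈ S

variable {n : ℕ} {P Q : (w : List A) → (Fin n → Fin w.length) → Prop}

theorem Recognizable.congr (hP : Recognizable P) (h : ∀ w v, Q w v ↔ P w v) : Recognizable Q := by
  rwa [show Q = P from funext₂ fun w v => propext (h w v)]

theorem Recognizable.imp (hP : Recognizable P) (hQ : Recognizable Q) :
    Recognizable fun w v => P w v → Q w v := by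
  obtain ⟨M, _, _, g, S, hM, hg, hS⟩ := hP
  obtain ⟨N, _, _, h, T, hN, hh, hT⟩ := hQ
  refine ⟨M × N, inferInstance, inferInstance, fun a x => (g a x, h a x), {z | z.1 ∈ S → z.2 ∈ T},
    hM.prod hN, (hg.prodMk hh).comp fun f x => (f.1 x, f.2 x), fun w v => ?_⟩
  refine (imp_congr (hS w v) (hT w v)).trans ?_
  rw [Set.mem_ofPred_eq, ← MonoidHom.coe_fst, ← MonoidHom.coe_snd, map_list_prod, map_list_prod,
    List.map_ofFn, List.map_ofFn]
  rfl

theorem Recognizable.forall {P : (w : List A) → (Fin (n + 1) → Fin w.length) → Prop}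
    (hP : Recognizable P) : Recognizable fun w v => ∀ p, P w (Fin.snoc v p) := by
  obtain ⟨M, _, _, h, S, hM, hh, hS⟩ := hP
  refine ⟨SchutzenbergerProduct M, inferInstance, inferInstance,
    fun a x => ⟨h a (Fin.snoc x False), {h a (Fin.snoc x True)}⟩, {z | z.marked ⊆ S},
    SchutzenbergerProduct.isAperiodic hM,
    hh.comp fun f x => (⟨f (Fin.snoc x False), {f (Fin.snoc x True)}⟩ : SchutzenbergerProduct M),
    fun w v => ?_⟩
  have marks_snoc (p i : Fin w.length) :
      (fun j => (Fin.snoc v p : Fin (n + 1) → Fin w.length) j = i) =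
        Fin.snoc (α := fun _ => Prop) (fun j => v j = i) (p = i) := by
    funext j
    cases j using Fin.lastCases <;> simp
  have update_eq (p : Fin w.length) :
      Function.update (fun i => h (w.get i) (Fin.snoc (fun j => v j = i) False)) p
        (h (w.get p) (Fin.snoc (fun j => v j = p) True)) =
      fun i => h (w.get i) fun j => (Fin.snoc v p : Fin (n + 1) → Fin w.length) j = i := by
    funext i
    obtain rfl | hp := eq_or_ne i p
    · simp [marks_snoc]
    · simp [marks_snoc, hp, hp.symm]
  simp only [hS, SchutzenbergerProduct.prod_ofFn, update_eq, Set.mem_ofPred_eq,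
    Set.range_subset_iff]

theorem recognizable_first (T : (Fin n → Prop) → Prop) {R : A → (Fin n → Prop) → Prop}
    (hR : EventuallyConst R cofinite) :
    Recognizable fun (w : List A) v => ∃ i, (T (fun j => v j = i) ∧ R (w.get i) fun j => v j = i) ∧
      ∀ k < i, ¬T fun j => v j = k := by
  classical
  let h (r : (Fin n → Prop) → Prop) (x : Fin n → Prop) : LeftZeroMonoid Prop :=
    if T x then some (r x) else none
  have eq_some_iff (r : (Fin n → Prop) → Prop) (x) : h r x = some True ↔ T x ∧ r x := by
    by_cases hx : T x
    · simp only [h, hx, true_and]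
      exact Option.some_inj.trans (by simp)
    · simp only [h, hx, false_and, iff_false]
      exact (Option.some_ne_none _).symm
  have eq_one_iff (r : (Fin n → Prop) → Prop) (x) : h r x = 1 ↔ ¬T x := by
    by_cases hx : T x
    · simp only [h, hx, not_true, iff_false]
      exact Option.some_ne_none _
    · simp only [h, hx, not_false_iff, iff_true]
      rfl
  refine ⟨LeftZeroMonoid Prop, inferInstance, inferInstance, fun a => h (R a),
    {(some True : Option Prop)}, LeftZeroMonoid.isAperiodic, hR.comp h, fun w v => ?_⟩
  refine Iff.symm (LeftZeroMonoid.prod_ofFn_eq_some_iff.trans ?_)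
  simp only [eq_some_iff, eq_one_iff]

theorem recognizable_false :
    Recognizable fun (w : List A) (_ : Fin n → Fin w.length) => False :=
  (recognizable_first (fun _ => False) (.const fun _ => False)).congr (by simp)

theorem recognizable_letter_eq (i : Fin n) (c : A) :
    Recognizable fun (w : List A) v => w.get (v i) = c := by
  have eventuallyConst_eq : EventuallyConst (fun a => a = c) cofinite :=
    eventuallyConst_pred.2 (.inr (Set.finite_singleton c).eventually_cofinite_notMem)
  refine (recognizable_first (fun x => x i) (eventuallyConst_eq.comp fun p _ => p)).congr
    fun w v => ?_
  simp +contextual [ne_of_gt]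

theorem recognizable_eq (i j : Fin n) : Recognizable fun (_ : List A) v => v i = v j := by
  refine (recognizable_first (fun x => x i) (.const fun x => x j)).congr fun w v => ?_
  constructor
  · exact fun h => ⟨v i, ⟨rfl, h.symm⟩, fun k hk => hk.ne'⟩
  · rintro ⟨_, ⟨rfl, h⟩, -⟩
    exact h.symm

theorem recognizable_lt (i j : Fin n) : Recognizable fun (_ : List A) v => v i < v j := by
  refine (recognizable_first (fun x => x i ∨ x j) (.const fun x => ¬x j)).congr fun w v => ?_
  constructor
  · intro h
    refine ⟨v i, ⟨.inl rfl, h.ne'⟩, fun k hk => ?_⟩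
    rintro (rfl | rfl)
    exacts [hk.false, hk.not_gt h]
  · rintro ⟨_, ⟨rfl | rfl, hj⟩, hfirst⟩
    · exact (not_lt.1 fun h => hfirst _ h (.inr rfl)).lt_of_ne (Ne.symm hj)
    · exact absurd rfl hj

theorem exists_eq_var_inr (t : (wordLang A).Term (Empty ⊕ Fin n)) :
    ∃ i, t = Term.var (Sum.inr i) := by
  cases t with
  | var x =>
    rcases x with x | i
    · exact x.elim
    · exact ⟨i, rfl⟩
  | func f _ => exact Empty.elim f

local instance (w : List A) : (wordLang A).Structure (Fin w.length) := wordStructure w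

theorem recognizable_realize (φ : (wordLang A).BoundedFormula Empty n) :
    Recognizable fun (w : List A) (v : Fin n → Fin w.length) => φ.Realize default v := by
  induction φ with
  | falsum => exact recognizable_false
  | equal t₁ t₂ =>
    obtain ⟨i, rfl⟩ := exists_eq_var_inr t₁
    obtain ⟨j, rfl⟩ := exists_eq_var_inr t₂
    exact recognizable_eq i j
  | @rel n l R ts =>
    choose i hi using fun k => exists_eq_var_inr (ts k)
    obtain rfl : ts = fun k => Term.var (Sum.inr (i k)) := funext hi
    match l, R with
    | 1, c => exact recognizable_letter_eq (i 0) c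
    | 2, _ => exact recognizable_lt (i 0) (i 1)
  | imp _ _ ih₁ ih₂ => exact ih₁.imp ih₂
  | all _ ih => exact ih.forall

theorem exists_monoid_of_sentence (θ : (wordLang A).Sentence) :
    ∃ (M : Type) (_ : Monoid M) (_ : Finite M) (h : A → M) (S : Set M), IsAperiodic M ∧
      EventuallyConst h cofinite ∧ ∀ w : List A, SatWord w θ ↔ (w.map h).prod ∈ S := by
  obtain ⟨M, _, _, h, S, hM, hh, hS⟩ := recognizable_realize θ
  refine ⟨M, inferInstance, inferInstance, fun a => h a default, S, hM,
    hh.comp fun f => f default, fun w => ?_⟩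
  have prod_eq : (List.ofFn fun i => h (w.get i) fun j => (default : Fin 0 → Fin w.length) j = i) =
      w.map fun a => h a default := by
    rw [← List.ofFn_getElem_eq_map]
    exact congrArg List.ofFn (funext fun i => congrArg _ (Subsingleton.elim _ _))
  rw [← prod_eq]
  exact hS w default

end Recognizable

/-! ### From temporal logic to first-order logic -/

section StandardTranslation

open FirstOrder.Language

variable {A : Type}

/-- The first-order formula `xᵢ < xⱼ`. -/
def ltFormula {n : ℕ} (i j : Fin n) : (wordLang A).BoundedFormula Empty n :=
  Relations.boundedFormula₂ (L := wordLang A) (show WordRel A 2 from ()) (&i) (&j)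

/-- The first-order formula saying that position `xᵢ` carries the letter `a`. -/
def letterFormula {n : ℕ} (a : A) (i : Fin n) : (wordLang A).BoundedFormula Empty n :=
  Relations.boundedFormula₁ (L := wordLang A) (show WordRel A 1 from a) (&i)

/-- The standard translation of a temporal formula, evaluated at the position `xᵢ`. In the temporal
cases `xₙ` is the position reached and `xₙ₊₁` ranges over the positions between `xᵢ` and `xₙ`. -/
def standardTranslation {n : ℕ} (i : Fin n) : LTL A → (wordLang A).BoundedFormula Empty n
  | .top => ⊤
  | .var a => letterFormula a i
  | .and φ ψ => standardTranslation i φ ⊓ standardTranslation i ψ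
  | .not φ => ∼(standardTranslation i φ)
  | .next φ => ∃' (ltFormula i.castSucc (Fin.last n) ⊓ standardTranslation (Fin.last n) φ ⊓
      ∀' ∼(ltFormula i.castSucc.castSucc (Fin.last (n + 1)) ⊓
        ltFormula (Fin.last (n + 1)) (Fin.last n).castSucc))
  | .ev φ => ∃' (ltFormula i.castSucc (Fin.last n) ⊓ standardTranslation (Fin.last n) φ)
  | .untl φ ψ => ∃' (ltFormula i.castSucc (Fin.last n) ⊓ standardTranslation (Fin.last n) φ ⊓
      ∀' (ltFormula i.castSucc.castSucc (Fin.last (n + 1)) ⟹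
        ltFormula (Fin.last (n + 1)) (Fin.last n).castSucc ⟹
          standardTranslation (Fin.last (n + 1)) ψ))

local instance (w : List A) : (wordLang A).Structure (Fin w.length) := wordStructure w

theorem realize_ltFormula {n : ℕ} {w : List A} {e : Empty → Fin w.length}
    {v : Fin n → Fin w.length} {i j : Fin n} :
    (ltFormula i j : (wordLang A).BoundedFormula Empty n).Realize e v ↔ v i < v j :=
  Iff.rfl

theorem realize_letterFormula {n : ℕ} {w : List A} {e : Empty → Fin w.length}
    {v : Fin n → Fin w.length} {a : A} {i : Fin n} :
    (letterFormula a i).Realize e v ↔ w.get (v i) = a :=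
  Iff.rfl

theorem sat_next_iff_exists {φ : LTL A} {a : A} {l : List A} {i : Fin (a :: l).length} :
    LTL.sat (wModel a l) i (.next φ) ↔
      ∃ p : Fin (a :: l).length, (i < p ∧ LTL.sat (wModel a l) p φ) ∧ ∀ k, ¬(i < k ∧ k < p) := by
  constructor
  · rintro ⟨hi, h⟩
    exact ⟨⟨i + 1, Nat.succ_lt_succ hi⟩, ⟨Nat.lt_succ_self _, h⟩,
      fun k ⟨hik, hk⟩ => hk.not_ge (Nat.succ_le_of_lt hik)⟩
  · rintro ⟨p, ⟨hip, hp⟩, hnext⟩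
    have p_eq : (p : ℕ) = i + 1 := by
      by_contra hne
      have succ_lt : (i : ℕ) + 1 < p := (Nat.succ_le_of_lt hip).lt_of_ne' hne
      exact hnext ⟨i + 1, succ_lt.trans p.2⟩ ⟨Nat.lt_succ_self _, succ_lt⟩
    exact ⟨Nat.lt_of_succ_lt_succ (p_eq.symm.trans_lt p.2), p_eq ▸ hp⟩

theorem sat_ev_iff_exists {φ : LTL A} {a : A} {l : List A} {i : Fin (a :: l).length} :
    LTL.sat (wModel a l) i (.ev φ) ↔
      ∃ p : Fin (a :: l).length, i < p ∧ LTL.sat (wModel a l) p φ :=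
  ⟨fun ⟨m, him, hm, h⟩ => ⟨⟨m, Nat.lt_succ_of_le hm⟩, him, h⟩,
    fun ⟨p, hip, hp⟩ => ⟨p, hip, Nat.le_of_lt_succ p.2, hp⟩⟩

theorem sat_untl_iff_exists {φ ψ : LTL A} {a : A} {l : List A} {i : Fin (a :: l).length} :
    LTL.sat (wModel a l) i (.untl φ ψ) ↔
      ∃ p : Fin (a :: l).length, (i < p ∧ LTL.sat (wModel a l) p φ) ∧
        ∀ k : Fin (a :: l).length, i < k → k < p → LTL.sat (wModel a l) k ψ :=
  ⟨fun ⟨m, him, hm, h, hψ⟩ =>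
      ⟨⟨m, Nat.lt_succ_of_le hm⟩, ⟨him, h⟩, fun k hik hkm => hψ k hik hkm⟩,
    fun ⟨p, ⟨hip, hp⟩, hψ⟩ => ⟨p, hip, Nat.le_of_lt_succ p.2, hp,
      fun k hik hkp => hψ ⟨k, hkp.trans p.2⟩ hik hkp⟩⟩

theorem realize_standardTranslation (φ : LTL A) {a : A} {l : List A} {n : ℕ} (i : Fin n)
    (e : Empty → Fin (a :: l).length) (v : Fin n → Fin (a :: l).length) :
    (standardTranslation i φ).Realize e v ↔ LTL.sat (wModel a l) (v i) φ := by
  induction φ generalizing n with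
  | top => simp only [standardTranslation, BoundedFormula.realize_top, LTL.sat]
  | var b => exact realize_letterFormula.trans (List.getElem_eq_iff (v i).2)
  | and φ ψ ihφ ihψ =>
    simp only [standardTranslation, BoundedFormula.realize_inf, ihφ, ihψ, LTL.sat]
  | not φ ih => simp only [standardTranslation, BoundedFormula.realize_not, ih, LTL.sat]
  | next φ ih =>
    simp only [standardTranslation, BoundedFormula.realize_ex, BoundedFormula.realize_inf,
      BoundedFormula.realize_all, BoundedFormula.realize_not, realize_ltFormula, ih,
      Fin.snoc_castSucc, Fin.snoc_last, sat_next_iff_exists]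
  | ev φ ih =>
    simp only [standardTranslation, BoundedFormula.realize_ex, BoundedFormula.realize_inf,
      realize_ltFormula, ih, Fin.snoc_castSucc, Fin.snoc_last, sat_ev_iff_exists]
  | untl φ ψ ihφ ihψ =>
    simp only [standardTranslation, BoundedFormula.realize_ex, BoundedFormula.realize_inf,
      BoundedFormula.realize_all, BoundedFormula.realize_imp, realize_ltFormula, ihφ, ihψ,
      Fin.snoc_castSucc, Fin.snoc_last, sat_untl_iff_exists]

/-- The sentence saying that a temporal formula holds at the initial position. -/
def initialSentence (φ : LTL A) : (wordLang A).Sentence :=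
  ∃' (standardTranslation 0 φ ⊓ ∀' ∼(ltFormula 1 0))

theorem satWord_initialSentence (φ : LTL A) (a : A) (l : List A) :
    SatWord (a :: l) (initialSentence φ) ↔ LTL.sat (wModel a l) 0 φ := by
  have realize_iff : SatWord (a :: l) (initialSentence φ) ↔
      ∃ p : Fin (a :: l).length, LTL.sat (wModel a l) p φ ∧ ∀ k, ¬k < p := by
    refine BoundedFormula.realize_ex.trans (exists_congr fun p => ?_)
    refine BoundedFormula.realize_inf.trans (and_congr (realize_standardTranslation φ _ _ _) ?_)
    exact BoundedFormula.realize_all.trans (forall_congr' fun k => BoundedFormula.realize_not)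
  rw [realize_iff]
  constructor
  · rintro ⟨p, hp, hfirst⟩
    obtain rfl : p = 0 := le_antisymm (not_lt.1 (hfirst 0)) (Fin.zero_le p)
    exact hp
  · exact fun h => ⟨0, h, fun k => Fin.not_lt_zero k⟩

theorem foDefinable_of_ltlDefinable {L : Set (List A)} (hL : LTLDefinable L) : FODefinable L := by
  obtain ⟨φ, rfl⟩ := hL
  refine ⟨initialSentence φ, Set.ext fun w => ?_⟩
  cases w with
  | nil => simp
  | cons a l => simp [satWord_initialSentence]

end StandardTranslation

/-! ### Temporal languages -/

section TemporalLanguage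

open Filter

variable {A B : Type*} {K L : Set (List A)}

/-- The language of the nonempty words whose tail lies in `K`. -/
def Next (K : Set (List A)) : Set (List A) := {w | w ≠ [] ∧ w.tail ∈ K}

/-- The non-strict until operator on languages, interpreted over all suffixes of a word including
the empty one: some suffix lies in `L` and all longer ones lie in `K`. -/
inductive Until (K L : Set (List A)) : List A → Prop
  | of_mem {w : List A} : w ∈ L → Until K L w
  | cons {a : A} {w : List A} : a :: w ∈ K → Until K L w → Until K L (a :: w)

@[simp] theorem nil_notMem_next : [] ∉ Next K := fun h => h.1 rfl

@[simp] theorem cons_mem_next {a : A} {w : List A} : a :: w ∈ Next K ↔ w ∈ K :=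
  and_iff_right (List.cons_ne_nil a w)

theorem until_iff {w : List A} : Until K L w ↔ w ∈ L ∨ w ∈ K ∧ w ∈ Next {u | Until K L u} := by
  constructor
  · rintro (hL | ⟨hK, h⟩)
    · exact .inl hL
    · exact .inr ⟨hK, cons_mem_next.2 h⟩
  · rintro (hL | ⟨hK, h⟩)
    · exact .of_mem hL
    · cases w with
      | nil => exact absurd h nil_notMem_next
      | cons a w => exact .cons hK (cons_mem_next.1 h)

@[simp] theorem until_nil_iff : Until K L [] ↔ [] ∈ L := by
  simp [until_iff (w := [])]

@[simp] theorem until_cons_iff {a : A} {w : List A} :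
    Until K L (a :: w) ↔ a :: w ∈ L ∨ a :: w ∈ K ∧ Until K L w := by
  rw [until_iff, cons_mem_next, Set.mem_ofPred_eq]

/-- The languages obtained from the conditions on the first letter by Boolean operations, next and
until. Unlike LTL-definable languages they may contain the empty word. -/
inductive IsTemporal : Set (List A) → Prop
  | univ : IsTemporal Set.univ
  | letter (a : A) : IsTemporal {w | w.head? = some a}
  | compl {K : Set (List A)} : IsTemporal K → IsTemporal Kᶜ
  | inter {K L : Set (List A)} : IsTemporal K → IsTemporal L → IsTemporal (K ∩ L)
  | next {K : Set (List A)} : IsTemporal K → IsTemporal (Next K)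
  | untl {K L : Set (List A)} : IsTemporal K → IsTemporal L → IsTemporal {w | Until K L w}

namespace IsTemporal

theorem congr (hK : IsTemporal K) (h : ∀ w, w ∈ L ↔ w ∈ K) : IsTemporal L := by
  rwa [Set.ext h]

theorem union (hK : IsTemporal K) (hL : IsTemporal L) : IsTemporal (K ∪ L) :=
  (hK.compl.inter hL.compl).compl.congr fun w => by rw [← Set.compl_union, compl_compl]

theorem const (p : Prop) : IsTemporal {_w : List A | p} := by
  by_cases hp : p
  · exact univ.congr fun w => by simp [hp]
  · exact univ.compl.congr fun w => by simp [hp]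

theorem biUnion {ι : Type*} {s : Set ι} (hs : s.Finite) {K : ι → Set (List A)}
    (hK : ∀ i, IsTemporal (K i)) : IsTemporal (⋃ i ∈ s, K i) := by
  induction s, hs using Set.Finite.induction_on with
  | empty => exact (const False).congr fun w => by simp
  | @insert i s _ _ ih =>
    rw [Set.biUnion_insert]
    exact (hK i).union ih

theorem preimage_of_fiber [Finite B] {f : List A → B} (hf : ∀ b, IsTemporal {w | f w = b})
    (T : Set B) : IsTemporal (f ⁻¹' T) :=
  (biUnion T.toFinite hf).congr fun w => by simp

theorem of_cons [Finite A] (hK : ∀ a, IsTemporal {w | a :: w ∈ K}) : IsTemporal K := by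
  have nonempty := biUnion Set.finite_univ fun a => (letter a).inter (hK a).next
  refine ((next univ).compl.inter (const ([] ∈ K))).union nonempty |>.congr fun w => ?_
  cases w <;> simp

theorem mem (c : A) : IsTemporal {w | c ∈ w} := by
  refine (untl univ (letter c)).congr fun w => ?_
  induction w with
  | nil => simp
  | cons a w ih => simp_all [eq_comm]

theorem exists_head?_eq {p : A → Prop} (hp : EventuallyConst p cofinite) :
    IsTemporal {w | ∃ a, w.head? = some a ∧ p a} := by
  have of_finite {q : A → Prop} (hq : {a | q a}.Finite) :
      IsTemporal {w | ∃ a, w.head? = some a ∧ q a} :=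
    (biUnion hq letter).congr fun w => by simp [and_comm]
  rcases eventuallyConst_pred.1 hp with hp | hp
  · refine ((next univ).inter (of_finite hp).compl).congr fun w => ?_
    cases w <;> simp
  · exact of_finite (by simpa using eventually_cofinite.1 hp)

theorem preimage_map {f : A → B} (hf : EventuallyConst f cofinite) {K : Set (List B)}
    (hK : IsTemporal K) : IsTemporal (List.map f ⁻¹' K) := by
  induction hK with
  | univ => exact univ
  | letter b => exact (exists_head?_eq (hf.comp (· = b))).congr fun w => by simp
  | compl _ ih => exact ih.compl
  | inter _ _ ihK ihL => exact ihK.inter ihL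
  | next _ ih => exact ih.next.congr fun w => by cases w <;> simp
  | untl _ _ ihK ihL =>
    refine (ihK.untl ihL).congr fun w => ?_
    induction w with
    | nil => simp
    | cons a w ih => simp_all

theorem preimage_takeWhile [DecidableEq A] (c : A) (hK : IsTemporal K) :
    IsTemporal (List.takeWhile (· ≠ c) ⁻¹' K) := by
  induction hK with
  | univ => exact univ
  | letter a =>
    refine ((letter c).compl.inter (letter a)).congr fun w => ?_
    cases w with
    | nil => simp
    | cons b w => by_cases hb : b = c <;> simp [hb]
  | compl _ ih => exact ih.compl
  | inter _ _ ihK ihL => exact ihK.inter ihL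
  | next _ ih =>
    refine ((letter c).compl.inter ih.next).congr fun w => ?_
    cases w with
    | nil => simp
    | cons b w => by_cases hb : b = c <;> simp [hb]
  | untl _ _ ihK ihL =>
    refine (((letter c).compl.inter ihK).untl ihL).congr fun w => ?_
    induction w with
    | nil => simp
    | cons b w ih => by_cases hb : b = c <;> simp_all

end IsTemporal

end TemporalLanguage

/-! ### Cutting words at a letter -/

section Cut

variable {A : Type*} [DecidableEq A]

/-- The part of a word after its last occurrence of `c`; the whole word if `c` does not occur. -/
def afterLast (c : A) : List A → List A
  | [] => []
  | a :: w => if c ∈ a :: w then afterLast c w else a :: w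

theorem notMem_afterLast (c : A) (w : List A) : c ∉ afterLast c w := by
  induction w with
  | nil => exact List.not_mem_nil
  | cons a w ih =>
    rw [afterLast]
    split_ifs with hc
    exacts [ih, hc]

theorem afterLast_of_notMem {c : A} {w : List A} (hc : c ∉ w) : afterLast c w = w := by
  cases w with
  | nil => rfl
  | cons a w => exact if_neg hc

theorem IsTemporal.preimage_afterLast (c : A) {K : Set (List A)} (hK : IsTemporal K) :
    IsTemporal (afterLast c ⁻¹' K) := by
  let J := {w | c ∈ w}ᶜ ∩ K
  have hJ : IsTemporal J := (mem c).compl.inter hK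
  have mem_of_until {w : List A} (hw : Until Set.univ ({w | w.head? = some c} ∩ Next J) w) :
      c ∈ w := by
    induction hw with
    | of_mem h => exact List.mem_of_mem_head? h.1
    | cons _ _ ih => exact List.mem_cons_of_mem _ ih
  refine (hJ.union (univ.untl ((letter c).inter hJ.next))).congr fun w => ?_
  induction w with
  | nil => simp [afterLast, J]
  | cons a w ih =>
    by_cases hc : c ∈ w
    · simp_all [afterLast, J]
    · have not_until := mt mem_of_until hc
      by_cases ha : a = c
      · simp_all [afterLast, J, afterLast_of_notMem]
      · simp_all [afterLast, J, eq_comm]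

variable {M : Type*} [Monoid M]

/-- The values under `h` of the blocks of a word that end before an occurrence of `c`; the part
after the last occurrence of `c` is left out. -/
def blockValues (h : A → M) (c : A) : List A → List M
  | [] => []
  | a :: w => if a = c then 1 :: blockValues h c w else (blockValues h c w).modifyHead (h a * ·)

variable {h : A → M} {c : A}

theorem blockValues_eq_nil_iff {w : List A} : blockValues h c w = [] ↔ c ∉ w := by
  induction w with
  | nil => simp [blockValues]
  | cons a w ih =>
    rcases eq_or_ne a c with rfl | ha
    · simp [blockValues]
    · simp [blockValues, ha, ha.symm, ih]

theorem head?_blockValues {w : List A} (hc : c ∈ w) :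
    (blockValues h c w).head? = some ((w.takeWhile (· ≠ c)).map h).prod := by
  induction w with
  | nil => simp at hc
  | cons a w ih => by_cases ha : a = c <;> simp_all [blockValues, eq_comm]

theorem prod_map_eq_prod_blockValues_mul (w : List A) :
    (w.map h).prod =
      ((blockValues h c w).map (· * h c)).prod * ((afterLast c w).map h).prod := by
  induction w with
  | nil => simp [blockValues, afterLast]
  | cons a w ih =>
    by_cases ha : a = c
    · simp [blockValues, afterLast, ha, ih, mul_assoc]
    by_cases hc : c ∈ w
    · obtain ⟨t, ts, hts⟩ := List.exists_cons_of_ne_nil (l := blockValues h c w) fun hw =>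
        blockValues_eq_nil_iff.1 hw hc
      simp_all [blockValues, afterLast, mul_assoc]
    · have hc' : c ∉ a :: w := by simp [hc, Ne.symm ha]
      rw [blockValues_eq_nil_iff.2 hc', afterLast_of_notMem hc', List.map_nil, List.prod_nil,
        one_mul]

/-- The words `c :: u` such that the blocks of `u` have values in `K`. -/
def atCut (h : A → M) (c : A) (K : Set (List M)) : Set (List A) :=
  {w | w.head? = some c} ∩ Next (blockValues h c ⁻¹' K)

theorem next_blockValues_iff {K L : Set (List M)} {w : List A} :
    blockValues h c w ∈ Next {ts | Until K L ts} ↔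
      Until (atCut h c Kᶜ)ᶜ (atCut h c L) w := by
  induction w with
  | nil => simp [blockValues, atCut]
  | cons a w ih =>
    by_cases ha : a = c
    · rw [blockValues, if_pos ha, cons_mem_next, Set.mem_ofPred_eq, until_iff, ih]
      simp [atCut, ha]
    · rw [blockValues, if_neg ha, until_cons_iff, ← ih]
      cases blockValues h c w <;> simp [atCut, ha]

namespace IsTemporal

theorem atCut (c : A) {K : Set (List M)} (hK : IsTemporal (blockValues h c ⁻¹' K)) :
    IsTemporal (atCut h c K) :=
  (letter c).inter hK.next

theorem preimage_blockValues
    (hh : ∀ m, IsTemporal {w | ((w.takeWhile (· ≠ c)).map h).prod = m}) {K : Set (List M)}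
    (hK : IsTemporal K) : IsTemporal (blockValues h c ⁻¹' K) := by
  have untl_mem {K L : Set (List M)} (hK : IsTemporal (blockValues h c ⁻¹' K))
      (hL : IsTemporal (blockValues h c ⁻¹' L)) :
      IsTemporal (blockValues h c ⁻¹' Next {ts | Until K L ts}) :=
    ((atCut (K := Kᶜ) c hK.compl).compl.untl (atCut c hL)).congr fun w => next_blockValues_iff
  induction hK with
  | univ => exact univ
  | letter t =>
    refine ((mem c).inter (hh t)).congr fun w => ?_
    by_cases hc : c ∈ w
    · simp [head?_blockValues hc, hc]
    · simp [blockValues_eq_nil_iff.2 hc, hc]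
  | compl _ ih => exact ih.compl
  | inter _ _ ihK ihL => exact ihK.inter ihL
  | @next K _ ih =>
    have until_empty : {ts | Until {_ts | False} K ts} = K := Set.ext fun ts =>
      until_iff.trans (by simp)
    exact until_empty ▸ untl_mem (const False) ih
  | untl _ _ ihK ihL =>
    exact (ihL.union (ihK.inter (untl_mem ihK ihL))).congr fun w => until_iff

end IsTemporal

end Cut

/-! ### From aperiodic monoids to temporal languages -/

section LocalDivisorInduction

open Filter

variable {A M : Type*} [Monoid M] [Finite M]

theorem isTemporal_prod_map_mul_right {x : M}
    (hx : ∀ y, IsTemporal {ts : List M | (ts.map (LocalDivisor.conj x)).prod = y}) (m : M) :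
    IsTemporal {ts : List M | (ts.map (· * x)).prod = m} := by
  refine IsTemporal.of_cons fun t => (IsTemporal.preimage_of_fiber hx {y | t * y.1 = m}).congr
    fun ts => ?_
  simp [LocalDivisor.val_prod_map_conj, mul_assoc]

theorem isTemporal_prod_map_of_blockValues [DecidableEq A] {h : A → M} {c : A}
    (hfirst : ∀ m, IsTemporal {w | ((w.takeWhile (· ≠ c)).map h).prod = m})
    (hlast : ∀ m, IsTemporal {w | ((afterLast c w).map h).prod = m})
    (hcut : ∀ m, IsTemporal {ts : List M | (ts.map (· * h c)).prod = m}) (m : M) :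
    IsTemporal {w : List A | (w.map h).prod = m} := by
  let value (w : List A) : M × M :=
    (((blockValues h c w).map (· * h c)).prod, ((afterLast c w).map h).prod)
  have isTemporal_value (p : M × M) : IsTemporal {w | value w = p} :=
    ((hcut p.1).preimage_blockValues hfirst |>.inter (hlast p.2)).congr fun w => Prod.ext_iff
  exact (IsTemporal.preimage_of_fiber isTemporal_value {p | p.1 * p.2 = m}).congr fun w => by
    rw [Set.mem_ofPred_eq, prod_map_eq_prod_blockValues_mul w]
    rfl

theorem isTemporal_prod_map_of_localDivisor
    (hM : ∀ x : M, x ≠ 1 →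
      ∀ y, IsTemporal {ts : List M | (ts.map (LocalDivisor.conj x)).prod = y})
    (s : Finset A) {h : A → M} (hs : ∀ a ∉ s, h a = 1) (m : M) :
    IsTemporal {w : List A | (w.map h).prod = m} := by
  classical
  induction s using Finset.induction_on generalizing h m with
  | empty =>
    refine (IsTemporal.const (1 = m)).congr fun w => ?_
    have map_eq : w.map h = w.map fun _ => 1 :=
      List.map_congr_left fun a _ => hs a (Finset.notMem_empty a)
    simp [map_eq]
  | insert c s _ ih =>
    by_cases hc : h c = 1
    · exact ih (fun a ha => by grind) m
    · have ih' := ih (h := Function.update h c 1) fun a ha => by grind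
      have map_update {w : List A} (hw : c ∉ w) : w.map (Function.update h c 1) = w.map h :=
        List.map_congr_left fun a ha =>
          Function.update_of_ne (ne_of_mem_of_not_mem ha hw) _ _
      refine isTemporal_prod_map_of_blockValues (fun m => ?_) (fun m => ?_)
        (isTemporal_prod_map_mul_right (hM _ hc)) m
      · refine ((ih' m).preimage_takeWhile c).congr fun w => ?_
        have hw : c ∉ w.takeWhile (· ≠ c) := fun hcw => by simpa using List.mem_takeWhile_imp hcw
        rw [Set.mem_preimage, Set.mem_ofPred_eq, Set.mem_ofPred_eq, map_update hw]
      · refine ((ih' m).preimage_afterLast c).congr fun w => ?_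
        rw [Set.mem_preimage, Set.mem_ofPred_eq, Set.mem_ofPred_eq,
          map_update (notMem_afterLast c w)]

theorem isTemporal_prod_eq (hM : IsAperiodic M) (m : M) :
    IsTemporal {u : List M | u.prod = m} := by
  induction hn : Nat.card M using Nat.strong_induction_on generalizing M with
  | _ n ih =>
    subst hn
    have := Fintype.ofFinite M
    simpa using isTemporal_prod_map_of_localDivisor (h := id) (fun x hx y =>
      (ih _ (LocalDivisor.card_lt hM hx) (LocalDivisor.isAperiodic hM) y rfl).preimage_map
        (cofinite_eq_bot (α := M) ▸ .bot)) Finset.univ (by simp) m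

theorem isTemporal_prod_map_mem {h : A → M} (hM : IsAperiodic M)
    (hh : EventuallyConst h cofinite) (S : Set M) : IsTemporal {w | (w.map h).prod ∈ S} :=
  (IsTemporal.preimage_of_fiber (isTemporal_prod_eq hM) S).preimage_map hh

end LocalDivisorInduction

/-! ### From temporal languages to temporal logic -/

section TemporalFormula

variable {A : Type}

theorem sat_wModel_succ (φ : LTL A) (a b : A) (l : List A) (n : ℕ) :
    LTL.sat (wModel a (b :: l)) (n + 1) φ ↔ LTL.sat (wModel b l) n φ := by
  induction φ generalizing n with
  | top => exact Iff.rfl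
  | var c => exact Iff.rfl
  | and φ ψ ihφ ihψ => simp only [LTL.sat, ihφ, ihψ]
  | not φ ih => simp only [LTL.sat, ih]
  | next φ ih => exact and_congr Nat.succ_lt_succ_iff (ih (n + 1))
  | ev φ ih =>
    constructor
    · rintro ⟨_ | m, hnm, hm, h⟩
      · exact absurd hnm (Nat.not_lt_zero _)
      · exact ⟨m, Nat.lt_of_succ_lt_succ hnm, Nat.le_of_succ_le_succ hm, (ih m).1 h⟩
    · rintro ⟨m, hnm, hm, h⟩
      exact ⟨m + 1, Nat.succ_lt_succ hnm, Nat.succ_le_succ hm, (ih m).2 h⟩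
  | untl φ ψ ihφ ihψ =>
    constructor
    · rintro ⟨_ | m, hnm, hm, h, hψ⟩
      · exact absurd hnm (Nat.not_lt_zero _)
      · exact ⟨m, Nat.lt_of_succ_lt_succ hnm, Nat.le_of_succ_le_succ hm, (ihφ m).1 h,
          fun k hnk hkm => (ihψ k).1 (hψ (k + 1) (Nat.succ_lt_succ hnk) (Nat.succ_lt_succ hkm))⟩
    · rintro ⟨m, hnm, hm, h, hψ⟩
      refine ⟨m + 1, Nat.succ_lt_succ hnm, Nat.succ_le_succ hm, (ihφ m).2 h, ?_⟩
      rintro (_ | k) hnk hkm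
      · exact absurd hnk (Nat.not_lt_zero _)
      · exact (ihψ k).2 (hψ k (Nat.lt_of_succ_lt_succ hnk) (Nat.lt_of_succ_lt_succ hkm))

variable {φ ψ : LTL A} {a b : A} {l : List A}

theorem not_sat_next_nil : ¬LTL.sat (wModel a []) 0 (.next φ) :=
  fun h => absurd h.1 (Nat.not_lt_zero 0)

theorem sat_next_cons_iff :
    LTL.sat (wModel a (b :: l)) 0 (.next φ) ↔ LTL.sat (wModel b l) 0 φ :=
  (and_iff_right (Nat.succ_pos _)).trans (sat_wModel_succ φ a b l 0)

theorem not_sat_untl_nil : ¬LTL.sat (wModel a []) 0 (.untl φ ψ) :=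
  fun ⟨_, hm, hm', _⟩ => absurd (hm.trans_le hm') (Nat.not_lt_zero 0)

theorem sat_untl_cons_iff :
    LTL.sat (wModel a (b :: l)) 0 (.untl φ ψ) ↔ LTL.sat (wModel b l) 0 φ ∨
      LTL.sat (wModel b l) 0 ψ ∧ LTL.sat (wModel b l) 0 (.untl φ ψ) := by
  simp only [← sat_wModel_succ _ a b l]
  constructor
  · rintro ⟨m, hm, hle, h, hψ⟩
    obtain rfl | hm : m = 1 ∨ 1 < m := by omega
    · exact .inl h
    · exact .inr ⟨hψ 1 one_pos hm, m, hm, hle, h, fun k hk => hψ k (one_pos.trans hk)⟩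
  · rintro (h | ⟨h₁, m, hm, hle, h, hψ⟩)
    · exact ⟨1, one_pos, Nat.succ_pos _, h, fun k hk hk' => absurd hk' (by omega)⟩
    · refine ⟨m, one_pos.trans hm, hle, h, fun k hk hkm => ?_⟩
      obtain rfl | hk : k = 1 ∨ 1 < k := by omega
      exacts [h₁, hψ k hk hkm]

/-- Disjunction of temporal formulas. -/
def disj (φ ψ : LTL A) : LTL A := .not (.and (.not φ) (.not ψ))

theorem sat_disj_iff {M : TModel A} {n : ℕ} :
    LTL.sat M n (disj φ ψ) ↔ LTL.sat M n φ ∨ LTL.sat M n ψ := by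
  simp only [disj, LTL.sat]
  tauto

/-- The formula `φ` defines `K` up to the empty word. -/
def Expresses (φ : LTL A) (K : Set (List A)) : Prop :=
  ∀ a l, LTL.sat (wModel a l) 0 φ ↔ a :: l ∈ K

variable {K L : Set (List A)}

theorem Expresses.exists_next (hφ : Expresses φ K) : ∃ χ : LTL A, Expresses χ (Next K) := by
  by_cases hnil : [] ∈ K
  · refine ⟨.not (.next (.not φ)), fun a l => ?_⟩
    rw [LTL.sat, cons_mem_next]
    cases l with
    | nil => exact iff_of_true not_sat_next_nil hnil
    | cons b l => rw [sat_next_cons_iff, LTL.sat, not_not, hφ]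
  · refine ⟨.next φ, fun a l => ?_⟩
    rw [cons_mem_next]
    cases l with
    | nil => exact iff_of_false not_sat_next_nil hnil
    | cons b l => rw [sat_next_cons_iff, hφ]

theorem Expresses.exists_until (hφ : Expresses φ K) (hψ : Expresses ψ L) :
    ∃ χ : LTL A, Expresses χ {w | Until K L w} := by
  -- At the last position of a word, `L` may still be reached at the empty suffix.
  obtain ⟨ψ', hψ'⟩ : ∃ ψ' : LTL A, ∀ a l,
      LTL.sat (wModel a l) 0 ψ' ↔ a :: l ∈ L ∨ a :: l ∈ K ∧ l = [] ∧ [] ∈ L := by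
    by_cases hnil : [] ∈ L
    · refine ⟨disj ψ (.and φ (.not (.next .top))), fun a l => ?_⟩
      rw [sat_disj_iff, LTL.sat, LTL.sat, hφ, hψ]
      cases l with
      | nil => simp [not_sat_next_nil, hnil]
      | cons b l => simp [LTL.sat, wModel]
    · exact ⟨ψ, fun a l => by simp [hψ a l, hnil]⟩
  refine ⟨disj ψ' (.and φ (.untl ψ' φ)), fun a l => ?_⟩
  induction l generalizing a with
  | nil =>
    rw [sat_disj_iff, LTL.sat, hφ, hψ']
    simp [not_sat_untl_nil]
  | cons b l ih =>
    have ih' := ih b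
    rw [sat_disj_iff, LTL.sat, Set.mem_ofPred_eq] at ih' ⊢
    rw [sat_untl_cons_iff, ih', until_cons_iff, hφ, hψ']
    simp

theorem IsTemporal.exists_expresses (hK : IsTemporal K) : ∃ φ : LTL A, Expresses φ K := by
  induction hK with
  | univ => exact ⟨.top, fun _ _ => Iff.rfl⟩
  | letter c => exact ⟨.var c, fun _ _ => Iff.rfl⟩
  | compl _ ih =>
    obtain ⟨φ, hφ⟩ := ih
    exact ⟨.not φ, fun a l => not_congr (hφ a l)⟩
  | inter _ _ ihK ihL =>
    obtain ⟨φ, hφ⟩ := ihK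
    obtain ⟨ψ, hψ⟩ := ihL
    exact ⟨.and φ ψ, fun a l => and_congr (hφ a l) (hψ a l)⟩
  | next _ ih => exact ih.choose_spec.exists_next
  | untl _ _ ihK ihL => exact ihK.choose_spec.exists_until ihL.choose_spec

theorem ltlDefinable_of_foDefinable {L : Set (List A)} (hL : FODefinable L) : LTLDefinable L := by
  obtain ⟨θ, rfl⟩ := hL
  obtain ⟨M, _, _, h, S, hM, hh, hS⟩ := exists_monoid_of_sentence θ
  obtain ⟨φ, hφ⟩ := (isTemporal_prod_map_mem hM hh S).exists_expresses
  refine ⟨φ, Set.ext fun w => ?_⟩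
  cases w with
  | nil => simp
  | cons a l =>
    have sat_iff : LTL.sat (wModel a l) 0 φ ↔ SatWord (a :: l) θ := (hφ a l).trans (hS _).symm
    simp [sat_iff]

end TemporalFormula

end Kamp

theorem FO_definable_iff_LTL_definable_general {A : Type} (L : Set (List A)) :
    FODefinable L ↔ LTLDefinable L :=
  ⟨Kamp.ltlDefinable_of_foDefinable, Kamp.foDefinable_of_ltlDefinable⟩

/-- A language of nonempty words is FO(<)-definable iff it is LTL-definable. -/
theorem FO_definable_iff_LTL_definable {A : Type} [Fintype A]
    (L : Set (List A)) (hL : [] ∉ L) :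
    FODefinable L ↔ LTLDefinable L :=
  FO_definable_iff_LTL_definable_general L
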